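/- Let V be a finite type, c : V → V → ℝ≥0 a capacity function, S ⊆ V a subset, P ≥ 1 an integer, and s, t distinct vertices of V with s ∉ S and t ∉ S. Then the minimum s-t cut value of the P-fold replication c_P of S equals the minimum s-t cut value of the P-reweighting c' of c with respect to S. -/

import Mathlib

/-!
STATEMENT 4: For distinct `s, t ∉ S`, the minimum s-t cut value of the P-fold
replication of `S` equals the minimum s-t cut value of the P-reweighting of `c`.
-/

open Finset

attribute [local instance] Classical.propDecidable

noncomputable section

/-- The value of the cut `A` for the capacity function `c`. -/
def cutValue {W : Type*} [Fintype W] (c : W → W → NNReal) (A : Finset W) : NNReal :=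
  ∑ u ∈ A, ∑ v ∈ Aᶜ, c u v

/-- The minimum `s`-`t` cut value (the least value of an `s`-`t` cut). -/
def minCutValue {W : Type*} [Fintype W] (c : W → W → NNReal) (s t : W) : NNReal :=
  sInf {x : NNReal | ∃ A : Finset W, s ∈ A ∧ t ∉ A ∧ cutValue c A = x}

/-- The capacity function of the `P`-fold replication of the subset `S`. -/
def repCap {V : Type*} (c : V → V → NNReal) (S : Set V) (P : ℕ) :
    ({v : V // v ∉ S} ⊕ (↥S × Fin P)) → ({v : V // v ∉ S} ⊕ (↥S × Fin P)) → NNReal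
  | Sum.inl u, Sum.inl v => c u.1 v.1
  | Sum.inl u, Sum.inr (v, _) => c u.1 v.1
  | Sum.inr (v, _), Sum.inl u => c v.1 u.1
  | Sum.inr (u, i), Sum.inr (v, j) => if i = j then c u.1 v.1 else 0

/-- The `P`-reweighting of `c` with respect to `S`. -/
def reweight {V : Type*} (c : V → V → NNReal) (S : Set V) (P : ℕ) : V → V → NNReal :=
  fun u v => if u ∈ S ∨ v ∈ S then (P : NNReal) * c u v else c u v

/-!
Embed `V` into the replicated vertex set in `P` ways, the `i`-th embedding sending `v ∈ S` to its
`i`-th copy. Then `P · c_P` is the sum over `i` of the push-forwards of `c'` along these embeddings: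
an edge meeting `S` lies in exactly one layer and has weight `P · c` there, while an edge avoiding
`S` lies in all `P` layers with weight `c`. Hence `P` times the `c_P`-value of a cut `A` is the sum
of the `c'`-values of its layers, each of which is an `s`-`t` cut, so it is at least `P` times the
minimum. Conversely, a cut `B` of `V` is every layer of the cut formed by all copies of elements
of `B`, which therefore has the same value.
-/

section Cut

variable {V W ι : Type*} [Fintype V]

/-- The preimage of a vertex set under a map of vertices, as a finset (`Finset.preimage` is only
available for maps that are injective on the preimage). -/
def cutPreimage (φ : V → W) (A : Finset W) : Finset V := {v | φ v ∈ A}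

lemma mem_cutPreimage {φ : V → W} {A : Finset W} {v : V} : v ∈ cutPreimage φ A ↔ φ v ∈ A :=
  mem_filter_univ v

lemma sum_fiberwise_eq_sum_cutPreimage {M : Type*} [AddCommMonoid M] (φ : V → W) (A : Finset W)
    (f : V → M) : ∑ x ∈ A, ∑ v with φ v = x, f v = ∑ v ∈ cutPreimage φ A, f v := by
  unfold cutPreimage
  -- The two sides differ in their decidability instances.
  convert sum_fiberwise_eq_sum_filter univ A φ f

/-- The push-forward of a capacity function along a map of vertices: the capacity from `x` to `y`
is the total capacity from the fibre over `x` to the fibre over `y`. -/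
def pushCap (φ : V → W) (c : V → V → NNReal) (x y : W) : NNReal :=
  ∑ u with φ u = x, ∑ v with φ v = y, c u v

variable [Fintype W]

lemma compl_cutPreimage (φ : V → W) (A : Finset W) :
    (cutPreimage φ A)ᶜ = cutPreimage φ Aᶜ := by
  ext v
  simp only [mem_compl, mem_cutPreimage]

lemma cutValue_nsmul (n : ℕ) (c : W → W → NNReal) (A : Finset W) :
    cutValue (n • c) A = n • cutValue c A := by
  simp only [cutValue, Pi.smul_apply, Finset.smul_sum]

lemma cutValue_sum (I : Finset ι) (c : ι → W → W → NNReal) (A : Finset W) :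
    cutValue (∑ i ∈ I, c i) A = ∑ i ∈ I, cutValue (c i) A := by
  simp only [cutValue, Finset.sum_apply, sum_comm (t := I)]

lemma cutValue_pushCap (φ : V → W) (c : V → V → NNReal) (A : Finset W) :
    cutValue (pushCap φ c) A = cutValue c (cutPreimage φ A) := by
  calc cutValue (pushCap φ c) A
      = ∑ x ∈ A, ∑ u with φ u = x, ∑ y ∈ Aᶜ, ∑ v with φ v = y, c u v :=
        sum_congr rfl fun _ _ => sum_comm
    _ = ∑ u ∈ cutPreimage φ A, ∑ v ∈ cutPreimage φ Aᶜ, c u v := by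
        simp only [sum_fiberwise_eq_sum_cutPreimage]
    _ = cutValue c (cutPreimage φ A) := by rw [cutValue, compl_cutPreimage]

lemma minCutValue_le_cutValue (c : W → W → NNReal) {s t : W} {A : Finset W}
    (hsA : s ∈ A) (htA : t ∉ A) : minCutValue c s t ≤ cutValue c A :=
  csInf_le (OrderBot.bddBelow _) ⟨A, hsA, htA, rfl⟩

lemma le_minCutValue {c : W → W → NNReal} {s t : W} (hst : s ≠ t) {x : NNReal}
    (hx : ∀ A : Finset W, s ∈ A → t ∉ A → x ≤ cutValue c A) : x ≤ minCutValue c s t := by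
  refine le_csInf ⟨_, {s}, mem_singleton_self s, notMem_singleton.2 hst.symm, rfl⟩ ?_
  rintro _ ⟨A, hsA, htA, rfl⟩
  exact hx A hsA htA

end Cut

section Replication

variable {V : Type*} (S : Set V) {P : ℕ}

/-- The embedding of `V` into the vertex set of the replication as its `i`-th layer: the vertices
outside `S` together with the `i`-th copies of the vertices in `S`. -/
def layer (i : Fin P) (v : V) : {v : V // v ∉ S} ⊕ (↥S × Fin P) :=
  if h : v ∈ S then Sum.inr (⟨v, h⟩, i) else Sum.inl ⟨v, h⟩

/-- The projection of the replication onto `V`, sending each copy of a vertex to that vertex. -/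
def unreplicate : {v : V // v ∉ S} ⊕ (↥S × Fin P) → V :=
  Sum.elim Subtype.val fun p => p.1

variable {S}

lemma layer_of_mem {v : V} (hv : v ∈ S) (i : Fin P) : layer S i v = Sum.inr (⟨v, hv⟩, i) :=
  dif_pos hv

lemma layer_of_notMem {v : V} (hv : v ∉ S) (i : Fin P) : layer S i v = Sum.inl ⟨v, hv⟩ :=
  dif_neg hv

lemma unreplicate_layer (i : Fin P) (v : V) : unreplicate S (layer S i v) = v := by
  by_cases hv : v ∈ S
  · rw [layer_of_mem hv, unreplicate, Sum.elim_inr]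
  · rw [layer_of_notMem hv, unreplicate, Sum.elim_inl]

lemma layer_eq_inl_iff (i : Fin P) (v : V) (x : {v : V // v ∉ S}) :
    layer S i v = Sum.inl x ↔ v = x := by
  by_cases hv : v ∈ S
  · simp only [layer_of_mem hv, reduceCtorEq, false_iff]
    rintro rfl
    exact x.2 hv
  · simp [layer_of_notMem hv, Subtype.ext_iff]

lemma layer_eq_inr_iff (i j : Fin P) (v : V) (x : S) :
    layer S i v = Sum.inr (x, j) ↔ v = x ∧ i = j := by
  by_cases hv : v ∈ S
  · simp [layer_of_mem hv, Subtype.ext_iff]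
  · simp only [layer_of_notMem hv, reduceCtorEq, false_iff]
    rintro ⟨rfl, -⟩
    exact hv x.2

variable [Fintype V] (c : V → V → NNReal)

lemma nsmul_repCap_eq_sum_pushCap_layer :
    P • repCap c S P = ∑ i : Fin P, pushCap (layer S i) (reweight c S P) := by
  ext1 x
  ext1 y
  simp only [Pi.smul_apply, Finset.sum_apply]
  rcases x with u | ⟨u, i⟩ <;> rcases y with v | ⟨v, j⟩
  · have huv : ¬((u : V) ∈ S ∨ (v : V) ∈ S) := not_or.2 ⟨u.2, v.2⟩
    simp [pushCap, layer_eq_inl_iff, repCap, reweight, sum_filter, huv]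
  · simp [pushCap, layer_eq_inl_iff, layer_eq_inr_iff, repCap, reweight, sum_filter, ite_and]
  · simp [pushCap, layer_eq_inl_iff, layer_eq_inr_iff, repCap, reweight, sum_filter, ite_and]
  · simp [pushCap, layer_eq_inr_iff, repCap, reweight, sum_filter, ite_and, eq_comm (a := i)]

lemma nsmul_cutValue_repCap (A : Finset ({v : V // v ∉ S} ⊕ (↥S × Fin P))) :
    P • cutValue (repCap c S P) A =
      ∑ i : Fin P, cutValue (reweight c S P) (cutPreimage (layer S i) A) := by
  rw [← cutValue_nsmul, nsmul_repCap_eq_sum_pushCap_layer, cutValue_sum]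
  simp only [cutValue_pushCap]

lemma cutValue_repCap_cutPreimage_unreplicate (hP : P ≠ 0) (B : Finset V) :
    cutValue (repCap c S P) (cutPreimage (unreplicate S) B) = cutValue (reweight c S P) B := by
  have cutPreimage_layer (i : Fin P) :
      cutPreimage (layer S i) (cutPreimage (unreplicate S) B) = B := by
    ext v
    rw [mem_cutPreimage, mem_cutPreimage, unreplicate_layer]
  refine nsmul_right_injective hP ?_
  simp only [nsmul_cutValue_repCap, cutPreimage_layer, Fin.sum_const]

lemma minCutValue_reweight_le_cutValue_repCap (hP : P ≠ 0) {s t : V} (hs : s ∉ S) (ht : t ∉ S)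
    {A : Finset ({v : V // v ∉ S} ⊕ (↥S × Fin P))}
    (hsA : Sum.inl ⟨s, hs⟩ ∈ A) (htA : Sum.inl ⟨t, ht⟩ ∉ A) :
    minCutValue (reweight c S P) s t ≤ cutValue (repCap c S P) A := by
  have le_layer (i : Fin P) : minCutValue (reweight c S P) s t ≤
      cutValue (reweight c S P) (cutPreimage (layer S i) A) :=
    minCutValue_le_cutValue _ (by rwa [mem_cutPreimage, layer_of_notMem hs])
      (by rwa [mem_cutPreimage, layer_of_notMem ht])
  refine (nsmul_le_nsmul_iff_right hP).1 ?_
  calc P • minCutValue (reweight c S P) s t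
      = ∑ _i : Fin P, minCutValue (reweight c S P) s t := (Fin.sum_const P _).symm
    _ ≤ ∑ i : Fin P, cutValue (reweight c S P) (cutPreimage (layer S i) A) :=
        sum_le_sum fun i _ => le_layer i
    _ = P • cutValue (repCap c S P) A := (nsmul_cutValue_repCap c A).symm

end Replication

theorem minCut_repCap_eq_minCut_reweight {V : Type*} [Fintype V]
    (c : V → V → NNReal) (S : Set V) (P : ℕ) (hP : 1 ≤ P)
    (s t : V) (hst : s ≠ t) (hs : s ∉ S) (ht : t ∉ S) :
    minCutValue (repCap c S P) (Sum.inl ⟨s, hs⟩) (Sum.inl ⟨t, ht⟩) =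
      minCutValue (reweight c S P) s t := by
  have hP0 : P ≠ 0 := Nat.one_le_iff_ne_zero.1 hP
  apply le_antisymm
  · refine le_minCutValue hst fun B hsB htB => ?_
    rw [← cutValue_repCap_cutPreimage_unreplicate c hP0 B]
    exact minCutValue_le_cutValue _ (mem_cutPreimage.2 hsB) (mem_cutPreimage.not.2 htB)
  · have hst' : (Sum.inl ⟨s, hs⟩ : {v : V // v ∉ S} ⊕ (↥S × Fin P)) ≠ Sum.inl ⟨t, ht⟩ := by
      simpa using hst
    exact le_minCutValue hst' fun _ => minCutValue_reweight_le_cutValue_repCap c hP0 hs ht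

end
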